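/- Given a multicritical circle map f: S^1 → S^1, there exists a constant C > 1 depending only on f such that the following holds. If M_i compactly contained in T_i ⊂ S^1, with i running through a finite index set, are intervals on the circle such that the family {T_i} has multiplicity of intersection at most m (each point of S^1 belongs to at most m of the T_i), then the product over i of the cross-ratio distortions D(f; M_i, T_i) is at most C^m. -/

import Mathlib

open Set Filter MeasureTheory

noncomputable section

/-- The Schwarzian derivative `Sf = (f''/f')' - (1/2) (f''/f')^2`. -/
def schwarzianDeriv (f : ℝ → ℝ) (x : ℝ) : ℝ :=
  deriv (fun y => deriv (deriv f) y / deriv f y) x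
    - (1 / 2) * (deriv (deriv f) x / deriv f x) ^ 2

/-- A multicritical circle map, described through its lift `F : ℝ → ℝ` to the real line.
It is an orientation-preserving `C^3` circle homeomorphism with finitely many critical
points `c 0, …, c (N-1)`, each of non-flat power-law type: near `c i` the derivative is
pinched between two multiples of `|x - c i| ^ (s i - 1)` with `s i > 1`, the Schwarzian
derivative is negative on a punctured neighborhood of each critical point, and
`log (F')` has bounded variation (bounded by `v`) off the critical neighborhoods. -/
structure MCM where
  /-- the lift of the circle map -/
  F : ℝ → ℝ
  smooth : ContDiff ℝ 3 F
  mono : StrictMono F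
  deg1 : ∀ x, F (x + 1) = F x + 1
  /-- number of critical points -/
  N : ℕ
  N_pos : 0 < N
  /-- the critical points (one representative in `[0,1)` for each) -/
  c : Fin N → ℝ
  c_mem : ∀ i, c i ∈ Set.Ico (0 : ℝ) 1
  c_inj : Function.Injective c
  isCrit : ∀ i, deriv F (c i) = 0
  critOnly : ∀ x, deriv F x = 0 → ∃ (i : Fin N) (k : ℤ), x = c i + (k : ℝ)
  /-- neighborhoods of the critical points -/
  W : Fin N → Set ℝ
  W_open : ∀ i, IsOpen (W i)
  c_mem_W : ∀ i, c i ∈ W i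
  /-- the criticalities (power-law exponents) -/
  s : Fin N → ℝ
  s_gt_one : ∀ i, 1 < s i
  al : Fin N → ℝ
  be : Fin N → ℝ
  al_pos : ∀ i, 0 < al i
  al_lt_be : ∀ i, al i < be i
  powerLaw : ∀ i, ∀ x ∈ W i, x ≠ c i →
    al i * |x - c i| ^ (s i - 1) < deriv F x ∧
      deriv F x < be i * |x - c i| ^ (s i - 1)
  negSchwarzian : ∀ i, ∀ x ∈ W i, x ≠ c i → schwarzianDeriv F x < 0
  /-- bound for the variation of `log DF` off the critical neighborhoods -/
  v : ℝ
  v_pos : 0 < v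
  logDF_var : eVariationOn (fun x => Real.log (deriv F x))
      (Set.Icc 0 1 \ ⋃ (i) (k : ℤ), (fun y => y + (k : ℝ)) '' W i) ≤ ENNReal.ofReal v

/-- The cross-ratio `b(M,T) = |L||R| / (|L ∪ M| |M ∪ R|)` of the pair of intervals
`M = [m₁, m₂] ⋐ T = [t₁, t₂]`. -/
def crossRatioB (t₁ m₁ m₂ t₂ : ℝ) : ℝ :=
  ((m₁ - t₁) * (t₂ - m₂)) / ((m₂ - t₁) * (t₂ - m₁))

/-- The cross-ratio distortion `D(f; M, T) = b(f(M), f(T)) / b(M, T)`. -/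
def crDistortion (f : ℝ → ℝ) (t₁ m₁ m₂ t₂ : ℝ) : ℝ :=
  crossRatioB (f t₁) (f m₁) (f m₂) (f t₂) / crossRatioB t₁ m₁ m₂ t₂

/-!
The distortion is bounded by the exponential of an additive quantity: there is a finite measure `μ`
on the circle with `D(f; M, T) ≤ exp (μ T)`, and `∑ μ (T_i) ≤ m * μ(S¹)` by the multiplicity
hypothesis.

* `D(f; M, T)` is bounded, since the power law and compactness bound `F'` on an interval by a
  constant times the mean slope of `F` there. Hence a large atom of `μ` at each critical
  point handles the `T` that contain one, and a large density of `μ` handles the long `T`.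
* A short `T` free of critical points is either near a critical point, where the Schwarzian
  derivative is negative and `D(f; M, T) ≤ 1`, or in a region where `log F'` is `K`-Lipschitz and
  `D(f; M, T) ≤ exp (2 * K * |T|)`.
-/

open scoped Topology NNReal

section CrossRatio

variable {F : ℝ → ℝ} {t₁ m₁ m₂ t₂ A B : ℝ}

lemma crDistortion_nonneg (hF : Monotone F) (h₁ : t₁ ≤ m₁) (h₂ : m₁ ≤ m₂) (h₃ : m₂ ≤ t₂) :
    0 ≤ crDistortion F t₁ m₁ m₂ t₂ := by
  have crossRatioB_nonneg {a b c d : ℝ} (hab : a ≤ b) (hbc : b ≤ c) (hcd : c ≤ d) :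
      0 ≤ crossRatioB a b c d :=
    div_nonneg (mul_nonneg (sub_nonneg.2 hab) (sub_nonneg.2 hcd))
      (mul_nonneg (sub_nonneg.2 (hab.trans hbc)) (sub_nonneg.2 (hbc.trans hcd)))
  exact div_nonneg (crossRatioB_nonneg (hF h₁) (hF h₂) (hF h₃)) (crossRatioB_nonneg h₁ h₂ h₃)

lemma crDistortion_le_mul (hF : StrictMonoOn F (Icc t₁ t₂))
    (h₁ : t₁ < m₁) (h₂ : m₁ < m₂) (h₃ : m₂ < t₂)
    (hL : (F m₁ - F t₁) * (m₂ - t₁) ≤ A * (F m₂ - F t₁) * (m₁ - t₁))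
    (hR : (F t₂ - F m₂) * (t₂ - m₁) ≤ B * (F t₂ - F m₁) * (t₂ - m₂)) :
    crDistortion F t₁ m₁ m₂ t₂ ≤ A * B := by
  have hF₁ : F t₁ < F m₁ := hF (by grind) (by grind) h₁
  have hF₂ : F m₁ < F m₂ := hF (by grind) (by grind) h₂
  have hF₃ : F m₂ < F t₂ := hF (by grind) (by grind) h₃
  have hL₀ : 0 ≤ (F m₁ - F t₁) * (m₂ - t₁) := mul_nonneg (by linarith) (by linarith)
  have hR₀ : 0 ≤ (F t₂ - F m₂) * (t₂ - m₁) := mul_nonneg (by linarith) (by linarith)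
  have hDF : 0 < (F m₂ - F t₁) * (F t₂ - F m₁) := mul_pos (by linarith) (by linarith)
  have hD : 0 < (m₁ - t₁) * (t₂ - m₂) := mul_pos (by linarith) (by linarith)
  rw [crDistortion, crossRatioB, crossRatioB, div_div_div_eq, div_le_iff₀ (mul_pos hDF hD)]
  calc (F m₁ - F t₁) * (F t₂ - F m₂) * ((m₂ - t₁) * (t₂ - m₁))
      = (F m₁ - F t₁) * (m₂ - t₁) * ((F t₂ - F m₂) * (t₂ - m₁)) := by ring
    _ ≤ A * (F m₂ - F t₁) * (m₁ - t₁) * (B * (F t₂ - F m₁) * (t₂ - m₂)) :=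
      mul_le_mul hL hR hR₀ (hL₀.trans hL)
    _ = A * B * ((F m₂ - F t₁) * (F t₂ - F m₁) * ((m₁ - t₁) * (t₂ - m₂))) := by ring

end CrossRatio

section Schwarzian

variable {F : ℝ → ℝ} {s : Set ℝ}

lemma hasDerivAt_inv_sqrt {D : ℝ → ℝ} {D' x : ℝ} (hD : HasDerivAt D D' x) (hx : 0 < D x) :
    HasDerivAt (fun y => (√(D y))⁻¹) (-(1 / 2) * (D' / D x * (√(D x))⁻¹)) x := by
  refine ((hD.sqrt hx.ne').inv (Real.sqrt_pos.2 hx).ne').congr_deriv ?_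
  rw [Real.sq_sqrt hx.le]
  field_simp

/-- Both `1 / √F'` and `F / √F'` solve `2 u'' + (SF) u = 0`. -/
lemma convexOn_mul_inv_sqrt_deriv (hF : ContDiff ℝ 3 F) (hs : Convex ℝ s)
    (hpos : ∀ x ∈ s, 0 < deriv F x) (hS : ∀ x ∈ s, schwarzianDeriv F x ≤ 0) {α β : ℝ}
    (hαβ : ∀ x ∈ s, 0 ≤ α * F x + β) :
    ConvexOn ℝ s fun x => (α * F x + β) * (√(deriv F x))⁻¹ := by
  have hF₁ : ContDiff ℝ 2 (deriv F) := hF.deriv'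
  have hF₂ : ContDiff ℝ 1 (deriv (deriv F)) := hF₁.deriv'
  let g (x : ℝ) : ℝ := (√(deriv F x))⁻¹
  let q (x : ℝ) : ℝ := deriv (deriv F) x / deriv F x
  have dF (x : ℝ) : HasDerivAt F (deriv F x) x :=
    (hF.differentiable (by norm_num) x).hasDerivAt
  have dF₁ (x : ℝ) : HasDerivAt (deriv F) (deriv (deriv F) x) x :=
    (hF₁.differentiable (by norm_num) x).hasDerivAt
  have dg (x : ℝ) (hx : x ∈ s) : HasDerivAt g (-(1 / 2) * (q x * g x)) x :=
    hasDerivAt_inv_sqrt (dF₁ x) (hpos x hx)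
  have dq (x : ℝ) (hx : x ∈ s) : HasDerivAt q (deriv q x) x :=
    ((hF₂.differentiable (by norm_num) x).div (dF₁ x).differentiableAt (hpos x hx).ne').hasDerivAt
  have du (x : ℝ) (hx : x ∈ s) : HasDerivAt (fun y => (α * F y + β) * g y)
      (α * deriv F x * g x + (α * F x + β) * (-(1 / 2) * (q x * g x))) x :=
    (((dF x).const_mul α).add_const β).mul (dg x hx)
  have du' (x : ℝ) (hx : x ∈ s) : HasDerivAt
      (fun y => α * deriv F y * g y + (α * F y + β) * (-(1 / 2) * (q y * g y)))
      (-(1 / 2) * schwarzianDeriv F x * ((α * F x + β) * g x)) x := by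
    have hq : deriv (deriv F) x = q x * deriv F x := (div_mul_cancel₀ _ (hpos x hx).ne').symm
    have hSq : schwarzianDeriv F x = deriv q x - 1 / 2 * q x ^ 2 := rfl
    refine ((((dF₁ x).const_mul α).mul (dg x hx)).add ((((dF x).const_mul α).add_const β).mul
      (((dq x hx).mul (dg x hx)).const_mul (-(1 / 2))))).congr_deriv ?_
    rw [hq, hSq, Pi.mul_apply]
    ring
  refine convexOn_of_hasDerivWithinAt2_nonneg hs
    (fun x hx => (du x hx).continuousAt.continuousWithinAt)
    (fun x hx => (du x (interior_subset hx)).hasDerivWithinAt)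
    (fun x hx => (du' x (interior_subset hx)).hasDerivWithinAt) fun x hx => ?_
  have hu : 0 ≤ (α * F x + β) * g x :=
    mul_nonneg (hαβ x (interior_subset hx)) (inv_nonneg.2 (Real.sqrt_nonneg _))
  nlinarith [hS x (interior_subset hx)]

lemma crDistortion_le_one_of_schwarzianDeriv_nonpos {t₁ m₁ m₂ t₂ : ℝ} (hF : ContDiff ℝ 3 F)
    (h₁ : t₁ < m₁) (h₂ : m₁ < m₂) (h₃ : m₂ < t₂) (hpos : ∀ x ∈ Icc t₁ t₂, 0 < deriv F x)
    (hS : ∀ x ∈ Icc t₁ t₂, schwarzianDeriv F x ≤ 0) :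
    crDistortion F t₁ m₁ m₂ t₂ ≤ 1 := by
  have hmono : StrictMonoOn F (Icc t₁ t₂) := strictMonoOn_of_deriv_pos (convex_Icc t₁ t₂)
    hF.continuous.continuousOn fun x hx => hpos x (interior_subset hx)
  have ht₁ : t₁ ∈ Icc t₁ t₂ := ⟨le_rfl, by linarith⟩
  have ht₂ : t₂ ∈ Icc t₁ t₂ := ⟨by linarith, le_rfl⟩
  have hm₁ : m₁ ∈ Icc t₁ t₂ := ⟨by linarith, by linarith⟩
  have hm₂ : m₂ ∈ Icc t₁ t₂ := ⟨by linarith, by linarith⟩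
  let g (x : ℝ) : ℝ := (√(deriv F x))⁻¹
  have hg {x : ℝ} (hx : x ∈ Icc t₁ t₂) : 0 < g x := inv_pos.2 (Real.sqrt_pos.2 (hpos x hx))
  have hconvL : ConvexOn ℝ (Icc t₁ t₂) fun x => (1 * F x + -F t₁) * g x :=
    convexOn_mul_inv_sqrt_deriv hF (convex_Icc t₁ t₂) hpos hS fun x hx => by
      linarith [hmono.monotoneOn ht₁ hx hx.1]
  have hconvR : ConvexOn ℝ (Icc t₁ t₂) fun x => (-1 * F x + F t₂) * g x :=
    convexOn_mul_inv_sqrt_deriv hF (convex_Icc t₁ t₂) hpos hS fun x hx => by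
      linarith [hmono.monotoneOn hx ht₂ hx.2]
  have hL := hconvL.secant_mono ht₁ hm₁ hm₂ h₁.ne' (h₁.trans h₂).ne' h₂.le
  have hR := hconvR.secant_mono ht₂ hm₁ hm₂ (h₂.trans h₃).ne h₃.ne h₂.le
  have hmul : g m₂ / g m₁ * (g m₁ / g m₂) = 1 := by
    have := (hg hm₁).ne'
    have := (hg hm₂).ne'
    field_simp
  rw [← hmul]
  refine crDistortion_le_mul hmono h₁ h₂ h₃ ?_ ?_
  · rw [div_le_div_iff₀ (by linarith) (by linarith)] at hL
    rw [div_mul_eq_mul_div, div_mul_eq_mul_div, le_div_iff₀ (hg hm₁)]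
    linarith
  · rw [← neg_div_neg_eq, ← neg_div_neg_eq (_ - _) (m₂ - t₂),
      div_le_div_iff₀ (by linarith) (by linarith)] at hR
    rw [div_mul_eq_mul_div, div_mul_eq_mul_div, le_div_iff₀ (hg hm₂)]
    linarith

end Schwarzian

section DerivLeSlope

/-- On `[a, b]` the derivative of `F` is at most `A` times the mean slope of `F` over `[a, b]`.
Written without division, so that degenerate intervals are harmless. -/
def DerivLeSlope (F : ℝ → ℝ) (A a b : ℝ) : Prop :=
  ∀ x ∈ Icc a b, deriv F x * (b - a) ≤ A * (F b - F a)

variable {F : ℝ → ℝ} {A B a b : ℝ}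

lemma DerivLeSlope.mono (h : DerivLeSlope F A a b) (hAB : A ≤ B) (hab : F a ≤ F b) :
    DerivLeSlope F B a b := fun x hx =>
  (h x hx).trans (mul_le_mul_of_nonneg_right hAB (sub_nonneg.2 hab))

lemma exists_deriv_mul_eq_sub (hF : Differentiable ℝ F) (hab : a < b) :
    ∃ x ∈ Ioo a b, deriv F x * (b - a) = F b - F a := by
  obtain ⟨x, hx, hslope⟩ :=
    exists_deriv_eq_slope F hab hF.continuous.continuousOn hF.differentiableOn
  exact ⟨x, hx, (eq_div_iff (sub_pos.2 hab).ne').1 hslope⟩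

lemma crDistortion_le_mul_of_derivLeSlope {t₁ m₁ m₂ t₂ : ℝ} (hF : Differentiable ℝ F)
    (hmono : StrictMonoOn F (Icc t₁ t₂)) (h₁ : t₁ < m₁) (h₂ : m₁ < m₂) (h₃ : m₂ < t₂)
    (hL : DerivLeSlope F A t₁ m₂) (hR : DerivLeSlope F B m₁ t₂) :
    crDistortion F t₁ m₁ m₂ t₂ ≤ A * B := by
  refine crDistortion_le_mul hmono h₁ h₂ h₃ ?_ ?_
  · obtain ⟨x, hx, hslope⟩ := exists_deriv_mul_eq_sub hF h₁
    rw [← hslope, mul_right_comm]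
    exact mul_le_mul_of_nonneg_right (hL x ⟨hx.1.le, hx.2.le.trans h₂.le⟩) (sub_nonneg.2 h₁.le)
  · obtain ⟨x, hx, hslope⟩ := exists_deriv_mul_eq_sub hF h₃
    rw [← hslope, mul_right_comm]
    exact mul_le_mul_of_nonneg_right (hR x ⟨h₂.le.trans hx.1.le, hx.2.le⟩) (sub_nonneg.2 h₃.le)

/-- A quarter of `[a, b]` next to the endpoint farther from `p` will do. -/
lemma exists_subinterval_far_from (p : ℝ) (hab : a ≤ b) :
    ∃ c, a ≤ c ∧ c + (b - a) / 4 ≤ b ∧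
      ∀ y ∈ Icc c (c + (b - a) / 4), ∀ x ∈ Icc a b, |x - p| ≤ 2 * |y - p| := by
  rcases le_total (a + b) (2 * p) with h | h
  · refine ⟨a, le_rfl, by linarith, fun y hy x hx => ?_⟩
    rw [abs_of_nonpos (by linarith [hy.2] : y - p ≤ 0), abs_le]
    constructor <;> linarith [hx.1, hx.2, hy.1, hy.2]
  · refine ⟨b - (b - a) / 4, by linarith, by linarith, fun y hy x hx => ?_⟩
    rw [abs_of_nonneg (by linarith [hy.1] : 0 ≤ y - p), abs_le]
    constructor <;> linarith [hx.1, hx.2, hy.1, hy.2]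

lemma derivLeSlope_of_powerLaw {p u α β : ℝ} (hF : Differentiable ℝ F) (hmono : Monotone F)
    (hab : a ≤ b) (hu : 0 ≤ u) (hα : 0 < α) (hβ : 0 ≤ β)
    (hF' : ∀ x ∈ Icc a b, α * |x - p| ^ u ≤ deriv F x ∧ deriv F x ≤ β * |x - p| ^ u) :
    DerivLeSlope F (4 * (β * 2 ^ u / α)) a b := by
  intro x hx
  rcases hab.eq_or_lt with rfl | hab
  · simp
  obtain ⟨c, hac, hcb, hfar⟩ := exists_subinterval_far_from p hab.le
  obtain ⟨y, hy, hslope⟩ := exists_deriv_mul_eq_sub hF (by linarith : c < c + (b - a) / 4)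
  have hxy : deriv F x ≤ β * 2 ^ u / α * deriv F y :=
    calc deriv F x ≤ β * |x - p| ^ u := (hF' x hx).2
      _ ≤ β * (2 * |y - p|) ^ u := by gcongr; exact hfar y (Ioo_subset_Icc_self hy) x hx
      _ = β * 2 ^ u / α * (α * |y - p| ^ u) := by
        rw [Real.mul_rpow zero_le_two (abs_nonneg _)]
        field_simp
      _ ≤ β * 2 ^ u / α * deriv F y := by
        gcongr
        exact (hF' y ⟨hac.trans hy.1.le, hy.2.le.trans hcb⟩).1
  calc deriv F x * (b - a) ≤ β * 2 ^ u / α * deriv F y * (b - a) :=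
        mul_le_mul_of_nonneg_right hxy (sub_nonneg.2 hab.le)
    _ = 4 * (β * 2 ^ u / α) * (deriv F y * (c + (b - a) / 4 - c)) := by ring
    _ = 4 * (β * 2 ^ u / α) * (F (c + (b - a) / 4) - F c) := by rw [hslope]
    _ ≤ 4 * (β * 2 ^ u / α) * (F b - F a) := by
        gcongr
        exacts [hmono hcb, hmono hac]

lemma derivLeSlope_exp_of_lipschitzOnWith_log {K : ℝ≥0} (hF : Differentiable ℝ F) (hab : a ≤ b)
    (hpos : ∀ x ∈ Icc a b, 0 < deriv F x)
    (hLip : LipschitzOnWith K (fun x => Real.log (deriv F x)) (Icc a b)) :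
    DerivLeSlope F (Real.exp (K * (b - a))) a b := by
  intro x hx
  rcases hab.eq_or_lt with rfl | hab
  · simp
  obtain ⟨y, hy, hslope⟩ := exists_deriv_mul_eq_sub hF hab
  have hy := Ioo_subset_Icc_self hy
  have hlog : Real.log (deriv F x) ≤ K * (b - a) + Real.log (deriv F y) :=
    calc Real.log (deriv F x) ≤ Real.log (deriv F y) + K * dist x y := hLip.le_add_mul hx hy
      _ ≤ K * (b - a) + Real.log (deriv F y) := by
        rw [add_comm]
        gcongr
        exact Real.dist_le_of_mem_Icc hx hy
  rw [← hslope, ← mul_assoc]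
  refine mul_le_mul_of_nonneg_right ?_ (sub_nonneg.2 hab.le)
  rwa [Real.log_le_iff_le_exp (hpos x hx), Real.exp_add, Real.exp_log (hpos y hy)] at hlog

end DerivLeSlope

section Compactness

lemma exists_forall_dist_lt_of_eventually_nhds_diagonal {ι X : Type*} [Preorder ι]
    [IsDirectedOrder ι] [Nonempty ι] [PseudoMetricSpace X] {Q : ι → X → X → Prop}
    (hQ : Monotone Q) {s : Set X} (hs : IsCompact s)
    (hloc : ∀ p ∈ s, ∃ i, ∀ᶠ x : X × X in 𝓝 (p, p), Q i x.1 x.2) :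
    ∃ i, ∃ δ > 0, ∀ a ∈ s, ∀ b, dist a b < δ → Q i a b := by
  let U (i : ι) : Set X := {p | ∀ᶠ x : X × X in 𝓝 (p, p), Q i x.1 x.2}
  have hUopen (i : ι) : IsOpen (U i) :=
    isOpen_setOfPred_eventually_nhds.preimage (continuous_id.prodMk continuous_id)
  have hUmono : Monotone U := fun i j hij p (hp : ∀ᶠ x in _, _) =>
    hp.mono fun x hx => hQ hij x.1 x.2 hx
  obtain ⟨i, hi⟩ := hs.elim_directed_cover U hUopen
    (fun p hp => mem_iUnion.2 (hloc p hp)) hUmono.directed_le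
  have hdiag : {x : X × X | Q i x.1 x.2} ∈ 𝓝ˢ ((fun p => (p, p)) '' s) :=
    mem_nhdsSet_iff_forall.2 (forall_mem_image.2 hi)
  obtain ⟨δ, hδ, hsub⟩ := (Metric.hasBasis_nhdsSet_thickening
    (hs.image (continuous_id.prodMk continuous_id))).mem_iff.1 hdiag
  refine ⟨i, δ, hδ, fun a ha b hab => @hsub (a, b) (Metric.mem_thickening_iff.2
    ⟨(a, a), mem_image_of_mem _ ha, ?_⟩)⟩
  rwa [Prod.dist_eq, dist_self, max_eq_right dist_nonneg, dist_comm]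

lemma exists_forall_dist_lt_of_add_intCast {Q : ℝ → ℝ → ℝ → Prop} (hQ : Monotone Q)
    (hshift : ∀ K a b (k : ℤ), Q K (a + k) (b + k) → Q K a b)
    (hloc : ∀ p, ∃ K, ∀ᶠ x : ℝ × ℝ in 𝓝 (p, p), Q K x.1 x.2) :
    ∃ K, ∃ δ > 0, ∀ a b, dist a b < δ → Q K a b := by
  obtain ⟨K, δ, hδ, h⟩ := exists_forall_dist_lt_of_eventually_nhds_diagonal hQ
    (isCompact_Icc (a := (0 : ℝ)) (b := 1)) fun p _ => hloc p
  refine ⟨K, δ, hδ, fun a b hab => hshift K a b (-⌊a⌋) (h _ ?_ _ (by rwa [dist_add_right]))⟩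
  rw [Int.cast_neg, ← sub_eq_add_neg]
  exact ⟨Int.fract_nonneg a, (Int.fract_lt_one a).le⟩

lemma eventually_forall_mem_Icc {X : Type*} [TopologicalSpace X] [LinearOrder X]
    [OrderTopology X] {P : X → Prop} {p : X} (h : ∀ᶠ x in 𝓝 p, P x) :
    ∀ᶠ x : X × X in 𝓝 (p, p), ∀ y ∈ Icc x.1 x.2, P y := by
  rw [nhds_prod_eq]
  exact (tendsto_fst.Icc tendsto_snd).eventually (eventually_smallSets_forall.2 h)

lemma exists_forall_le_of_periodic {φ : ℝ → ℝ} {c : ℝ} (hφ : Continuous φ)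
    (hper : Function.Periodic φ c) (hc : 0 < c) : ∃ x, ∀ y, φ x ≤ φ y := by
  obtain ⟨x, -, hx⟩ := isCompact_Icc.exists_isMinOn (nonempty_Icc.2 hc.le) hφ.continuousOn
  refine ⟨x, fun y => ?_⟩
  obtain ⟨z, hz, hyz⟩ := hper.exists_mem_Ico₀ hc y
  exact hyz ▸ hx (Ico_subset_Icc_self hz)

end Compactness

section Arc

/-- The arc of the circle `ℝ / ℤ` covered by the interval `[a, b]` of the line. -/
def arc (a b : ℝ) : Set UnitAddCircle := (↑) '' Icc a b

lemma coe_mem_arc {x a b : ℝ} : (x : UnitAddCircle) ∈ arc a b ↔ ∃ k : ℤ, x + k ∈ Icc a b := by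
  have hcoe (y : ℝ) : (y : UnitAddCircle) = x ↔ ∃ k : ℤ, x + k = y := by
    rw [← sub_eq_zero, ← AddCircle.coe_sub, AddCircle.coe_eq_zero_iff]
    simp only [zsmul_one, eq_sub_iff_add_eq']
  simp only [arc, mem_image, hcoe]
  exact ⟨fun ⟨_, hy, k, hk⟩ => ⟨k, hk ▸ hy⟩, fun ⟨k, hk⟩ => ⟨x + k, hk, k, rfl⟩⟩

lemma measurableSet_arc (a b : ℝ) : MeasurableSet (arc a b) :=
  (isCompact_Icc.image (AddCircle.continuous_mk' 1)).isClosed.measurableSet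

lemma sub_le_volume_real_arc {a b : ℝ} (hab : b - a ≤ 1) : b - a ≤ volume.real (arc a b) := by
  have hsub : Ioc a b ⊆ (↑) ⁻¹' arc a b ∩ Ioc a (a + 1) := fun x hx =>
    ⟨mem_image_of_mem _ (Ioc_subset_Icc_self hx), hx.1, by linarith [hx.2]⟩
  calc b - a ≤ volume.real (Ioc a b) := by rw [Real.volume_real_Ioc]; exact le_max_left _ _
    _ ≤ volume.real ((↑) ⁻¹' arc a b ∩ Ioc a (a + 1)) :=
      measureReal_mono hsub (measure_ne_top_of_subset inter_subset_right measure_Ioc_lt_top.ne)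
    _ = volume.real (arc a b) := by
      rw [← measureReal_restrict_apply' measurableSet_Ioc]
      exact (UnitAddCircle.measurePreserving_mk a).measureReal_preimage
        (measurableSet_arc a b).nullMeasurableSet

lemma sum_measureReal_le_of_ncard_le {X ι : Type*} [Fintype ι] [MeasurableSpace X]
    {μ : Measure X} [IsFiniteMeasure μ] {A : ι → Set X} (hA : ∀ i, MeasurableSet (A i)) {m : ℕ}
    (hm : ∀ x, {i | x ∈ A i}.ncard ≤ m) : ∑ i, μ.real (A i) ≤ m * μ.real univ := by
  classical
  have hint (i : ι) : Integrable ((A i).indicator (1 : X → ℝ)) μ :=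
    (integrable_const 1).indicator (hA i)
  have hcount (x : X) : ∑ i, (A i).indicator (1 : X → ℝ) x ≤ m := by
    simp only [indicator_apply, Pi.one_apply, Finset.sum_boole, ← ncard_coe_finset,
      Finset.coe_filter_univ, Nat.cast_le]
    exact hm x
  calc ∑ i, μ.real (A i) = ∫ x, ∑ i, (A i).indicator (1 : X → ℝ) x ∂μ := by
        rw [integral_finsetSum _ fun i _ => hint i]
        simp only [integral_indicator_one (hA _)]
    _ ≤ ∫ _, (m : ℝ) ∂μ :=
        integral_mono (integrable_finsetSum _ fun i _ => hint i) (integrable_const _) hcount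
    _ = m * μ.real univ := by rw [integral_const, smul_eq_mul, mul_comm]

lemma one_le_measureReal_sum_dirac {X ι : Type*} [Fintype ι] [MeasurableSpace X] {x : ι → X}
    {s : Set X} {i : ι} (hi : x i ∈ s) : 1 ≤ (∑ j, Measure.dirac (x j)).real s := by
  have hle : Measure.dirac (x i) ≤ ∑ j, Measure.dirac (x j) :=
    Finset.single_le_sum (f := fun j => Measure.dirac (x j)) (fun _ _ => Measure.zero_le _)
      (Finset.mem_univ i)
  calc (1 : ℝ) = (Measure.dirac (x i)).real s := by
        rw [measureReal_def, Measure.dirac_apply_of_mem hi, ENNReal.toReal_one]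
    _ ≤ (∑ j, Measure.dirac (x j)).real s := ENNReal.toReal_mono (measure_ne_top _ s) (hle s)

end Arc

section ExponentialBound

/-- Every pair `M ⋐ [a, b]` has cross-ratio distortion at most `exp (L * (b - a))` under `F`. -/
def CrDistortionLeExp (F : ℝ → ℝ) (L a b : ℝ) : Prop :=
  ∀ m₁ m₂, a < m₁ → m₁ < m₂ → m₂ < b → crDistortion F a m₁ m₂ b ≤ Real.exp (L * (b - a))

variable {F : ℝ → ℝ} {L L' a b p : ℝ}

lemma CrDistortionLeExp.mono (h : CrDistortionLeExp F L a b) (hL : L ≤ L') :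
    CrDistortionLeExp F L' a b := fun m₁ m₂ h₁ h₂ h₃ => (h m₁ m₂ h₁ h₂ h₃).trans <| by
  gcongr
  linarith

lemma crDistortionLeExp_of_lipschitzOnWith_log {K : ℝ≥0} (hF : Differentiable ℝ F)
    (hpos : ∀ x ∈ Icc a b, 0 < deriv F x)
    (hLip : LipschitzOnWith K (fun x => Real.log (deriv F x)) (Icc a b)) :
    CrDistortionLeExp F (2 * K) a b := by
  intro m₁ m₂ h₁ h₂ h₃
  have hmono : StrictMonoOn F (Icc a b) := strictMonoOn_of_deriv_pos (convex_Icc a b)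
    hF.continuous.continuousOn fun x hx => hpos x (interior_subset hx)
  have hL : Icc a m₂ ⊆ Icc a b := Icc_subset_Icc_right h₃.le
  have hR : Icc m₁ b ⊆ Icc a b := Icc_subset_Icc_left h₁.le
  calc crDistortion F a m₁ m₂ b
      ≤ Real.exp (K * (m₂ - a)) * Real.exp (K * (b - m₁)) :=
        crDistortion_le_mul_of_derivLeSlope hF hmono h₁ h₂ h₃
          (derivLeSlope_exp_of_lipschitzOnWith_log hF (h₁.trans h₂).le
            (fun x hx => hpos x (hL hx)) (hLip.mono hL))
          (derivLeSlope_exp_of_lipschitzOnWith_log hF (h₂.trans h₃).le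
            (fun x hx => hpos x (hR hx)) (hLip.mono hR))
    _ ≤ Real.exp (K * (b - a)) * Real.exp (K * (b - a)) := by gcongr
    _ = Real.exp (2 * K * (b - a)) := by rw [← Real.exp_add]; ring_nf

lemma exists_eventually_crDistortionLeExp_of_deriv_pos (hF : ContDiff ℝ 2 F)
    (hp : 0 < deriv F p) :
    ∃ L, ∀ᶠ x : ℝ × ℝ in 𝓝 (p, p), CrDistortionLeExp F L x.1 x.2 := by
  have hF' : ContDiff ℝ 1 (deriv F) := hF.deriv'
  obtain ⟨K, s, hs, hLip⟩ := (hF'.contDiffAt.log hp.ne').exists_lipschitzOnWith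
  have hpos : ∀ᶠ x in 𝓝 p, 0 < deriv F x := hF'.continuous.continuousAt.eventually_const_lt hp
  refine ⟨2 * K, (eventually_forall_mem_Icc (hpos.and hs)).mono fun x hx => ?_⟩
  exact crDistortionLeExp_of_lipschitzOnWith_log (hF.differentiable (by norm_num))
    (fun y hy => (hx y hy).1) (hLip.mono fun y hy => (hx y hy).2)

lemma eventually_crDistortionLeExp_zero_of_schwarzianDeriv_neg (hF : ContDiff ℝ 3 F)
    (hmono : Monotone F) (hS : ∀ᶠ x in 𝓝[≠] p, schwarzianDeriv F x < 0) (hp : deriv F p = 0) :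
    ∀ᶠ x : ℝ × ℝ in 𝓝 (p, p),
      (∀ y ∈ Icc x.1 x.2, deriv F y ≠ 0) → CrDistortionLeExp F 0 x.1 x.2 := by
  refine (eventually_forall_mem_Icc (eventually_nhdsWithin_iff.1 hS)).mono
    fun x hx hne m₁ m₂ h₁ h₂ h₃ => ?_
  rw [zero_mul, Real.exp_zero]
  exact crDistortion_le_one_of_schwarzianDeriv_nonpos hF h₁ h₂ h₃
    (fun y hy => hmono.deriv_nonneg.lt_of_ne' (hne y hy))
    fun y hy => (hx y hy fun h => hne y hy (h ▸ hp)).le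

end ExponentialBound

lemma periodic_deriv {φ : ℝ → ℝ} {c : ℝ} (h : Function.Periodic φ c) :
    Function.Periodic (deriv φ) c := fun x => by
  rw [← deriv_comp_add_const, h.funext]

namespace MCM

variable (f : MCM)

lemma differentiable_F : Differentiable ℝ f.F := f.smooth.differentiable (by norm_num)

lemma contDiff_deriv_F : ContDiff ℝ 2 (deriv f.F) := f.smooth.deriv'

lemma F_add_intCast (x : ℝ) (k : ℤ) : f.F (x + k) = f.F x + k :=
  AddConstMapClass.map_add_int (⟨f.F, f.deg1⟩ : AddConstMap ℝ ℝ 1 1) x k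

lemma periodic_deriv_F (k : ℤ) : Function.Periodic (deriv f.F) k := fun x => by
  simp only [← deriv_comp_add_const, f.F_add_intCast, deriv_add_const]

lemma periodic_schwarzianDeriv_F (k : ℤ) : Function.Periodic (schwarzianDeriv f.F) k := by
  have h₁ := f.periodic_deriv_F k
  have h₂ := periodic_deriv h₁
  have h₃ := periodic_deriv (h₂.div h₁)
  intro x
  simp only [schwarzianDeriv, h₁ x, h₂ x]
  congr 1
  exact h₃ x

lemma crDistortion_add_intCast (t₁ m₁ m₂ t₂ : ℝ) (k : ℤ) :
    crDistortion f.F (t₁ + k) (m₁ + k) (m₂ + k) (t₂ + k) = crDistortion f.F t₁ m₁ m₂ t₂ := by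
  simp only [crDistortion, crossRatioB, f.F_add_intCast, add_sub_add_right_eq_sub]

lemma exists_eventually_sub_mem_W {p : ℝ} (hp : deriv f.F p = 0) :
    ∃ (i : Fin f.N) (k : ℤ), p = f.c i + k ∧ ∀ᶠ x : ℝ in 𝓝 p, x - k ∈ f.W i := by
  obtain ⟨i, k, rfl⟩ := f.critOnly p hp
  refine ⟨i, k, rfl, (continuous_sub_right (k : ℝ)).continuousAt.eventually_mem ?_⟩
  simpa using (f.W_open i).mem_nhds (f.c_mem_W i)

lemma eventually_schwarzianDeriv_neg {p : ℝ} (hp : deriv f.F p = 0) :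
    ∀ᶠ x in 𝓝[≠] p, schwarzianDeriv f.F x < 0 := by
  obtain ⟨i, k, rfl, hW⟩ := f.exists_eventually_sub_mem_W hp
  refine eventually_nhdsWithin_iff.2 (hW.mono fun x hx hne => ?_)
  rw [← (f.periodic_schwarzianDeriv_F k).sub_eq]
  exact f.negSchwarzian i _ hx fun h => hne (sub_eq_iff_eq_add.1 h)

/-- At regular points the exponent is `u = 0`. -/
lemma exists_eventually_powerLaw (p : ℝ) :
    ∃ u α β : ℝ, 0 ≤ u ∧ 0 < α ∧ 0 ≤ β ∧
      ∀ᶠ x in 𝓝 p, α * |x - p| ^ u ≤ deriv f.F x ∧ deriv f.F x ≤ β * |x - p| ^ u := by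
  rcases (f.mono.monotone.deriv_nonneg (x := p)).eq_or_lt with hp | hp
  · obtain ⟨i, k, rfl, hW⟩ := f.exists_eventually_sub_mem_W hp.symm
    have hu : 0 < f.s i - 1 := sub_pos.2 (f.s_gt_one i)
    refine ⟨f.s i - 1, f.al i, f.be i, hu.le, f.al_pos i, ((f.al_pos i).trans (f.al_lt_be i)).le,
      hW.mono fun x hx => ?_⟩
    rcases eq_or_ne x (f.c i + k) with rfl | hne
    · simp [← hp, hu.ne']
    · have h := f.powerLaw i (x - k) hx fun h => hne (sub_eq_iff_eq_add.1 h)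
      rw [(f.periodic_deriv_F k).sub_eq, sub_sub, add_comm (k : ℝ)] at h
      exact ⟨h.1.le, h.2.le⟩
  · have hcont : ContinuousAt (deriv f.F) p := f.contDiff_deriv_F.continuous.continuousAt
    refine ⟨0, deriv f.F p / 2, 2 * deriv f.F p, le_rfl, half_pos hp, by positivity, ?_⟩
    simp only [Real.rpow_zero, mul_one]
    exact (hcont.eventually_const_le (half_lt_self hp)).and
      (hcont.eventually_le_const (by linarith))

lemma exists_derivLeSlope_of_dist_lt :
    ∃ K, ∃ δ > 0, ∀ a b, dist a b < δ → a ≤ b → DerivLeSlope f.F K a b := by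
  refine exists_forall_dist_lt_of_add_intCast (Q := fun K a b => a ≤ b → DerivLeSlope f.F K a b)
    (fun K K' hK a b h hab => (h hab).mono hK (f.mono.monotone hab)) (fun K a b k h hab x hx => ?_)
    fun p => ?_
  · simpa only [f.periodic_deriv_F k x, f.F_add_intCast, add_sub_add_right_eq_sub] using
      h (by linarith) (x + k) ⟨by linarith [hx.1], by linarith [hx.2]⟩
  · obtain ⟨u, α, β, hu, hα, hβ, hpow⟩ := f.exists_eventually_powerLaw p
    exact ⟨_, (eventually_forall_mem_Icc hpow).mono fun x hx hab =>
      derivLeSlope_of_powerLaw f.differentiable_F f.mono.monotone hab hu hα hβ hx⟩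

lemma exists_forall_deriv_le : ∃ M, ∀ x, deriv f.F x ≤ M := by
  obtain ⟨y, hy⟩ := exists_forall_le_of_periodic (φ := fun x => -deriv f.F x) (c := 1)
    f.contDiff_deriv_F.continuous.neg (fun x => by simpa using f.periodic_deriv_F 1 x) one_pos
  exact ⟨deriv f.F y, fun x => neg_le_neg_iff.1 (hy x)⟩

lemma exists_forall_le_F_sub {δ : ℝ} (hδ : 0 < δ) :
    ∃ η > 0, ∀ a b, δ ≤ b - a → η ≤ f.F b - f.F a := by
  obtain ⟨y, hy⟩ := exists_forall_le_of_periodic (φ := fun x => f.F (x + δ) - f.F x) (c := 1)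
    (by have := f.differentiable_F.continuous; fun_prop)
    (fun x => by simp only [add_right_comm x 1 δ, f.deg1, add_sub_add_right_eq_sub]) one_pos
  refine ⟨f.F (y + δ) - f.F y, sub_pos.2 (f.mono (lt_add_of_pos_right y hδ)), fun a b hab => ?_⟩
  have hb : f.F (a + δ) ≤ f.F b := f.mono.monotone (by linarith)
  linarith [hy a]

lemma exists_derivLeSlope :
    ∃ K, ∀ a b, a ≤ b → b - a ≤ 1 → DerivLeSlope f.F K a b := by
  obtain ⟨K, δ, hδ, hshort⟩ := f.exists_derivLeSlope_of_dist_lt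
  obtain ⟨M, hM⟩ := f.exists_forall_deriv_le
  obtain ⟨η, hη, hlong⟩ := f.exists_forall_le_F_sub hδ
  refine ⟨max K (M / η), fun a b hab hab₁ => ?_⟩
  have hFab : f.F a ≤ f.F b := f.mono.monotone hab
  rcases lt_or_ge (b - a) δ with hδab | hδab
  · refine (hshort a b ?_ hab).mono (le_max_left _ _) hFab
    rwa [dist_comm, Real.dist_eq, abs_of_nonneg (sub_nonneg.2 hab)]
  · refine DerivLeSlope.mono (A := M / η) (fun x _ => ?_) (le_max_right _ _) hFab
    have hx : 0 ≤ deriv f.F x := f.mono.monotone.deriv_nonneg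
    calc deriv f.F x * (b - a) ≤ deriv f.F x := mul_le_of_le_one_right hx hab₁
      _ ≤ M := hM x
      _ = M / η * η := (div_mul_cancel₀ M hη.ne').symm
      _ ≤ M / η * (f.F b - f.F a) :=
        mul_le_mul_of_nonneg_left (hlong a b hδab) (div_nonneg (hx.trans (hM x)) hη.le)

lemma exists_crDistortion_le :
    ∃ B > 1, ∀ t₁ m₁ m₂ t₂, t₁ < m₁ → m₁ < m₂ → m₂ < t₂ → t₂ - t₁ ≤ 1 →
      crDistortion f.F t₁ m₁ m₂ t₂ ≤ B := by
  obtain ⟨K, hK⟩ := f.exists_derivLeSlope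
  refine ⟨K * K + 2, by nlinarith [mul_self_nonneg K], fun t₁ m₁ m₂ t₂ h₁ h₂ h₃ hT => ?_⟩
  have h := crDistortion_le_mul_of_derivLeSlope f.differentiable_F (f.mono.strictMonoOn _) h₁ h₂ h₃
    (hK t₁ m₂ (by linarith) (by linarith)) (hK m₁ t₂ (by linarith) (by linarith))
  linarith

lemma exists_crDistortionLeExp_of_dist_lt :
    ∃ L, ∃ δ > 0, ∀ a b, dist a b < δ → (∀ x ∈ Icc a b, deriv f.F x ≠ 0) →
      CrDistortionLeExp f.F L a b := by
  refine exists_forall_dist_lt_of_add_intCast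
    (Q := fun L a b => (∀ x ∈ Icc a b, deriv f.F x ≠ 0) → CrDistortionLeExp f.F L a b)
    (fun L L' hL a b h hne => (h hne).mono hL) (fun L a b k h hne m₁ m₂ h₁ h₂ h₃ => ?_) fun p => ?_
  · rw [← f.crDistortion_add_intCast _ _ _ _ k, ← add_sub_add_right_eq_sub b a (k : ℝ)]
    refine h (fun x hx => ?_) _ _ (by linarith) (by linarith) (by linarith)
    rw [← (f.periodic_deriv_F k).sub_eq]
    exact hne _ ⟨by linarith [hx.1], by linarith [hx.2]⟩
  · rcases (f.mono.monotone.deriv_nonneg (x := p)).eq_or_lt with hp | hp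
    · exact ⟨0, eventually_crDistortionLeExp_zero_of_schwarzianDeriv_neg f.smooth
        f.mono.monotone (f.eventually_schwarzianDeriv_neg hp.symm) hp.symm⟩
    · obtain ⟨L, hL⟩ := exists_eventually_crDistortionLeExp_of_deriv_pos
        (f.smooth.of_le (by norm_num)) hp
      exact ⟨L, hL.mono fun x hx _ => hx⟩

lemma exists_crDistortionLeExp :
    ∃ L : ℝ≥0, ∀ a b, b - a ≤ 1 → (∀ x ∈ Icc a b, deriv f.F x ≠ 0) →
      CrDistortionLeExp f.F L a b := by
  obtain ⟨B, hB, hlong⟩ := f.exists_crDistortion_le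
  obtain ⟨L, δ, hδ, hshort⟩ := f.exists_crDistortionLeExp_of_dist_lt
  refine ⟨(max L (Real.log B / δ)).toNNReal, fun a b hab hne => ?_⟩
  refine CrDistortionLeExp.mono (fun m₁ m₂ h₁ h₂ h₃ => ?_) (Real.le_coe_toNNReal _)
  rcases lt_or_ge (b - a) δ with hδab | hδab
  · refine ((hshort a b ?_ hne).mono (le_max_left _ _)) m₁ m₂ h₁ h₂ h₃
    rwa [dist_comm, Real.dist_eq, abs_of_pos (by linarith)]
  · have hlog : 0 ≤ Real.log B / δ := div_nonneg (Real.log_pos hB).le hδ.le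
    calc crDistortion f.F a m₁ m₂ b ≤ B := hlong a m₁ m₂ b h₁ h₂ h₃ hab
      _ = Real.exp (Real.log B / δ * δ) := by
        rw [div_mul_cancel₀ _ hδ.ne', Real.exp_log (by linarith)]
      _ ≤ Real.exp (max L (Real.log B / δ) * (b - a)) := by
        gcongr
        exact le_max_right _ _

lemma exists_measure_crDistortion_le :
    ∃ μ : Measure UnitAddCircle, IsFiniteMeasure μ ∧
      ∀ t₁ m₁ m₂ t₂, t₁ < m₁ → m₁ < m₂ → m₂ < t₂ → t₂ - t₁ ≤ 1 →
        crDistortion f.F t₁ m₁ m₂ t₂ ≤ Real.exp (μ.real (arc t₁ t₂)) := by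
  obtain ⟨B, hB, hcrit⟩ := f.exists_crDistortion_le
  obtain ⟨L, hreg⟩ := f.exists_crDistortionLeExp
  let ν : Measure UnitAddCircle := ∑ i, Measure.dirac (f.c i : UnitAddCircle)
  refine ⟨L • volume + (Real.log B).toNNReal • ν, inferInstance,
    fun t₁ m₁ m₂ t₂ h₁ h₂ h₃ hT => ?_⟩
  rw [measureReal_add_apply, measureReal_nnreal_smul_apply, measureReal_nnreal_smul_apply,
    Real.coe_toNNReal _ (Real.log_pos hB).le]
  by_cases hne : ∀ x ∈ Icc t₁ t₂, deriv f.F x ≠ 0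
  · refine (hreg t₁ t₂ hT hne m₁ m₂ h₁ h₂ h₃).trans (Real.exp_le_exp.2 ?_)
    have hvol := mul_le_mul_of_nonneg_left (sub_le_volume_real_arc hT) L.coe_nonneg
    have hν : 0 ≤ Real.log B * ν.real (arc t₁ t₂) :=
      mul_nonneg (Real.log_pos hB).le measureReal_nonneg
    linarith
  · push Not at hne
    obtain ⟨x, hx, hx₀⟩ := hne
    obtain ⟨i, k, rfl⟩ := f.critOnly x hx₀
    have hν : 1 ≤ ν.real (arc t₁ t₂) :=
      one_le_measureReal_sum_dirac (i := i) (coe_mem_arc.2 ⟨k, hx⟩)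
    calc crDistortion f.F t₁ m₁ m₂ t₂ ≤ B := hcrit t₁ m₁ m₂ t₂ h₁ h₂ h₃ hT
      _ = Real.exp (Real.log B) := (Real.exp_log (by linarith)).symm
      _ ≤ _ := by
        gcongr
        refine (le_mul_of_one_le_right (Real.log_pos hB).le hν).trans (le_add_of_nonneg_left ?_)
        positivity

end MCM

/-- **Cross-Ratio Inequality.** For a multicritical circle map `f` there is
`C > 1` depending only on `f` such that for any finite family of interval pairs
`M_i ⋐ T_i` on the circle whose `T_i` have multiplicity of intersection at most `m`,
the product of the cross-ratio distortions is at most `C ^ m`. -/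
theorem cross_ratio_inequality (f : MCM) :
    ∃ C : ℝ, 1 < C ∧
      ∀ (ι : Type) [Fintype ι] (t₁ m₁ m₂ t₂ : ι → ℝ) (m : ℕ),
        (∀ i, t₁ i < m₁ i ∧ m₁ i < m₂ i ∧ m₂ i < t₂ i ∧ t₂ i - t₁ i < 1) →
        (∀ x : ℝ, {i : ι | ∃ k : ℤ, x + (k : ℝ) ∈ Set.Icc (t₁ i) (t₂ i)}.ncard ≤ m) →
        ∏ i, crDistortion f.F (t₁ i) (m₁ i) (m₂ i) (t₂ i) ≤ C ^ m := by
  obtain ⟨μ, _, hμ⟩ := f.exists_measure_crDistortion_le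
  refine ⟨Real.exp (μ.real univ + 1), Real.one_lt_exp_iff.2 (by positivity),
    fun ι _ t₁ m₁ m₂ t₂ m hT hm => ?_⟩
  have hmult (x : UnitAddCircle) : {i | x ∈ arc (t₁ i) (t₂ i)}.ncard ≤ m := by
    induction x using QuotientAddGroup.induction_on with
    | H y => simpa only [coe_mem_arc] using hm y
  calc ∏ i, crDistortion f.F (t₁ i) (m₁ i) (m₂ i) (t₂ i)
      ≤ ∏ i, Real.exp (μ.real (arc (t₁ i) (t₂ i))) := by
        refine Finset.prod_le_prod (fun i _ => ?_) fun i _ => ?_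
        all_goals obtain ⟨h₁, h₂, h₃, h⟩ := hT i
        · exact crDistortion_nonneg f.mono.monotone h₁.le h₂.le h₃.le
        · exact hμ _ _ _ _ h₁ h₂ h₃ h.le
    _ = Real.exp (∑ i, μ.real (arc (t₁ i) (t₂ i))) := (Real.exp_sum _ _).symm
    _ ≤ Real.exp (m * (μ.real univ + 1)) := by
        gcongr
        exact (sum_measureReal_le_of_ncard_le (fun i => measurableSet_arc _ _) hmult).trans
          (by linarith [m.cast_nonneg (α := ℝ)])
    _ = Real.exp (μ.real univ + 1) ^ m := Real.exp_nat_mul _ _
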